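/- Let F be a finite field with q = |F| elements and n ≥ 2. For an invertible matrix M and 1 ≤ i ≤ n, let ℓ(M, i) denote the smallest index k such that M e_i lies in the span of e_1, …, e_k (equivalently, (M e_i)_m = 0 for all m > k). Then: (i) for every pair i ≠ j in {1, …, n}, |{T ∈ 𝒯 : ℓ(T, i) = j}| = (q − 1) q^{n + j − 3}; and (ii) for every i in {1, …, n}, (q − 1) · |{T ∈ 𝒯 : ℓ(T, i) = i}| = (q^{n−1} − 1)² + (q − 1)² (q^{i−1} − 1) q^{n−2}. Consequently the top-label chain P₁(i, j) = |{T ∈ 𝒯 : ℓ(T, i) = j}| / |𝒯| satisfies P₁(i, j) = (q−1)² q^{n+j−3} / ((qⁿ−1)(q^{n−1}−1)) for i ≠ j and P₁(i, i) = ((q^{n−1}−1)² + (q−1)²(q^{i−1}−1) q^{n−2}) / ((qⁿ−1)(q^{n−1}−1)). -/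

import Mathlib

/-- The set of transvections: matrices of the form `I + v aᵀ` with `a, v` nonzero vectors
satisfying `aᵀ v = 0`. -/
def transvections (n : ℕ) (F : Type*) [Field F] : Set (Matrix (Fin n) (Fin n) F) :=
  {M | ∃ a v : Fin n → F, a ≠ 0 ∧ v ≠ 0 ∧ (∑ i, a i * v i) = 0 ∧
    M = 1 + Matrix.vecMulVec v a}

/-- The set of transvections `T` with `ℓ(T, i) = j`, i.e. such that `j` is the smallest
index with `T e_i ∈ span(e_0, …, e_j)` (0-based): the `j`-th entry of column `i` of `T` is
nonzero and all lower entries vanish. -/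
def transvectionsTopIdx (n : ℕ) (F : Type*) [Field F] (i j : Fin n) :
    Set (Matrix (Fin n) (Fin n) F) :=
  {T | T ∈ transvections n F ∧ T j i ≠ 0 ∧ ∀ m : Fin n, j < m → T m i = 0}

theorem card_fiber_mul_card {F V W : Type*} [Field F] [AddCommGroup V] [Module F V]
    [AddCommGroup W] [Module F W] [Finite V] (f : V →ₗ[F] W)
    (hf : Function.Surjective f) (w : W) :
    Nat.card {x // f x = w} * Nat.card W = Nat.card V := by
  have : Finite W := Finite.of_surjective f hf
  have := Fintype.ofFinite W
  obtain ⟨x₀, rfl⟩ := hf w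
  have key : ∀ y, Nat.card {x // f x = y} = Nat.card {x // f x = f x₀} := by
    intro y
    obtain ⟨x₁, rfl⟩ := hf y
    refine Nat.card_congr
      ⟨fun x => ⟨x - x₁ + x₀, by simp [x.2]⟩, fun x => ⟨x - x₀ + x₁, by simp [x.2]⟩, ?_, ?_⟩ <;>
    · intro x
      ext
      simp
  rw [← Nat.card_congr (Equiv.sigmaFiberEquiv f), Nat.card_sigma, Finset.sum_congr rfl
    fun y _ => key y, Finset.sum_const, Finset.card_univ, Nat.card_eq_fintype_card (α := W),
    smul_eq_mul, mul_comm]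

section Counting

variable {F : Type*} [Field F] {n : ℕ}

/-- The functional `a ↦ ∑ i, a i * v i`. -/
def pairing (v : Fin n → F) : (Fin n → F) →ₗ[F] F :=
  ∑ i, v i • LinearMap.proj i

theorem pairing_apply (v a : Fin n → F) : pairing v a = ∑ i, a i * v i := by
  simp [pairing, mul_comm]

theorem pairing_single (v : Fin n → F) (k : Fin n) (c : F) :
    pairing v (Pi.single k c) = c * v k := by
  simp [pairing_apply, Pi.single_apply]

/-- Transvections whose `i`-th column is `u`. -/
def transvectionsWithCol (i : Fin n) (u : Fin n → F) : Set (Matrix (Fin n) (Fin n) F) :=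
  {T | T ∈ transvections n F ∧ (fun m => T m i) = u}

theorem card_transvectionsWithCol_single (i : Fin n) (c : F) (hc : c ≠ 1) :
    Nat.card (transvectionsWithCol i (Pi.single i c)) = 0 := by
  have : IsEmpty (transvectionsWithCol i (Pi.single i c)) := by
    refine ⟨?_⟩
    rintro ⟨T, ⟨a, w, ha, hw, haw, rfl⟩, hu⟩
    have hwm : ∀ m, m ≠ i → w m * a i = 0 := fun m hm => by
      simpa [Matrix.vecMulVec_apply, hm] using congrFun hu m
    have hwi : 1 + w i * a i = c := by
      simpa [Matrix.vecMulVec_apply] using congrFun hu i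
    have hai : a i ≠ 0 := by
      rintro h
      exact hc (by simpa [h] using hwi.symm)
    rw [Finset.sum_eq_single i (fun m _ hm => by
      rw [(mul_eq_zero.mp (hwm m hm)).resolve_right hai, mul_zero]) (by simp)] at haw
    exact hc (by rw [← hwi, mul_comm, haw, add_zero])
  exact Nat.card_of_isEmpty

theorem vecMulVec_eq_iff {a v b w : Fin n → F} (ha : a ≠ 0) (hv : v ≠ 0) :
    Matrix.vecMulVec w b = Matrix.vecMulVec v a ↔ ∃ c : Fˣ, b = c • a ∧ w = c⁻¹ • v := by
  constructor
  · intro h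
    obtain ⟨k, hk⟩ := Function.ne_iff.mp ha
    obtain ⟨l, hl⟩ := Function.ne_iff.mp hv
    have h' : ∀ r s, w r * b s = v r * a s := fun r s => congrFun (congrFun h r) s
    have hlk : w l * b k ≠ 0 := h' l k ▸ mul_ne_zero hl hk
    have hw : w l ≠ 0 := left_ne_zero_of_mul hlk
    refine ⟨Units.mk0 (v l / w l) (div_ne_zero hl hw), ?_, ?_⟩
    · ext s
      have := h' l s
      simp only [Pi.smul_apply, Units.smul_def, Units.val_mk0, smul_eq_mul]
      field_simp
      linear_combination this
    · ext r
      have h1 := h' r k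
      have h2 := h' l k
      have hak : a k ≠ 0 := hk
      have hvl : v l ≠ 0 := hl
      simp only [Pi.smul_apply, Units.smul_def, Units.val_inv_eq_inv_val, Units.val_mk0,
        smul_eq_mul, inv_div]
      field_simp
      refine mul_right_cancel₀ hak ?_
      linear_combination w l * h1 - w r * h2
  · rintro ⟨c, rfl, rfl⟩
    ext r s
    simp only [Matrix.vecMulVec_apply, Pi.smul_apply, Units.smul_def, smul_eq_mul,
      Units.val_inv_eq_inv_val]
    field_simp

variable [Fintype F]

theorem card_pairing_one_zero (hn : 2 ≤ n) (v : Fin n → F) (i k : Fin n)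
    (hki : k ≠ i) (hk : v k ≠ 0) :
    Nat.card {a : Fin n → F // a i = 1 ∧ ∑ m, a m * v m = 0} = Fintype.card F ^ (n - 2) := by
  classical
  let f : (Fin n → F) →ₗ[F] F × F := (LinearMap.proj i).prod (pairing v)
  have hf : Function.Surjective f := by
    rintro ⟨x, y⟩
    refine ⟨Pi.single i x + Pi.single k ((y - x * v i) / v k), ?_⟩
    simp [f, pairing_single, hki.symm, hk]
  have h := card_fiber_mul_card f hf (1, 0)
  have e : Nat.card {a // f a = (1, 0)} =
      Nat.card {a : Fin n → F // a i = 1 ∧ ∑ m, a m * v m = 0} :=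
    Nat.card_congr (Equiv.subtypeEquivRight fun a => by simp [f, pairing_apply])
  rw [e] at h
  obtain ⟨d, rfl⟩ := Nat.exists_eq_add_of_le hn
  have hq : 0 < Fintype.card F := Fintype.card_pos
  simp only [Nat.card_eq_fintype_card, Fintype.card_prod, Fintype.card_fun, Fintype.card_fin,
    Nat.add_sub_cancel_left] at h ⊢
  refine Nat.eq_of_mul_eq_mul_right (Nat.mul_pos hq hq) (h.trans ?_)
  ring

theorem card_orthogonal_ne_zero (a : Fin n → F) (ha : a ≠ 0) :
    Nat.card {v : Fin n → F // v ≠ 0 ∧ ∑ m, a m * v m = 0} = Fintype.card F ^ (n - 1) - 1 := by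
  classical
  obtain ⟨k, hk⟩ := Function.ne_iff.mp ha
  have hf : Function.Surjective (pairing a) := fun y =>
    ⟨Pi.single k (y / a k), by rw [pairing_single]; exact div_mul_cancel₀ _ hk⟩
  have h := card_fiber_mul_card (pairing a) hf 0
  obtain ⟨d, rfl⟩ : ∃ d, n = d + 1 := ⟨n - 1, by have := k.pos; omega⟩
  have h' : Nat.card {v // pairing a v = 0} = Fintype.card F ^ d := by
    simp only [Nat.card_eq_fintype_card, Fintype.card_fun, Fintype.card_fin] at h ⊢
    exact Nat.eq_of_mul_eq_mul_right Fintype.card_pos (h.trans (pow_succ _ _))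
  rw [Nat.add_sub_cancel, ← h']
  simp only [Nat.card_eq_fintype_card, Fintype.card_subtype]
  rw [← Finset.card_erase_of_mem (a := 0) (by simp)]
  congr 1
  ext v
  simp [pairing_apply, mul_comm]

theorem card_ne_zero_of_apply_eq_zero (i : Fin n) :
    Nat.card {a : Fin n → F // a ≠ 0 ∧ a i = 0} = Fintype.card F ^ (n - 1) - 1 := by
  classical
  rw [← card_orthogonal_ne_zero (Pi.single i (1 : F)) (by simp)]
  exact Nat.card_congr (Equiv.subtypeEquivRight fun a => by simp [Pi.single_apply])

theorem card_transvections_filter (i : Fin n) (U : Finset (Fin n → F)) :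
    Nat.card {T : Matrix (Fin n) (Fin n) F // T ∈ transvections n F ∧ (fun m => T m i) ∈ U}
      = ∑ u ∈ U, Nat.card (transvectionsWithCol i u) := by
  classical
  rw [← Finset.sum_coe_sort, ← Nat.card_sigma]
  refine Nat.card_congr ⟨fun T => ⟨⟨_, T.2.2⟩, T.1, T.2.1, rfl⟩,
    fun p => ⟨p.2.1, p.2.2.1, by rw [p.2.2.2]; exact p.1.2⟩, fun _ => rfl, ?_⟩
  rintro ⟨⟨u, hu⟩, T, hT⟩
  obtain rfl : (fun m => T m i) = u := hT.2
  rfl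

theorem card_transvectionsWithCol_of_ne (hn : 2 ≤ n) (i k : Fin n) (u : Fin n → F)
    (hki : k ≠ i) (hk : u k ≠ 0) :
    Nat.card (transvectionsWithCol i u) = Fintype.card F ^ (n - 2) := by
  classical
  rw [← card_pairing_one_zero hn (u - Pi.single i 1) i k hki (by simpa [hki] using hk)]
  set v := u - Pi.single i 1 with hv
  have hvk : v k ≠ 0 := by simpa [hv, hki] using hk
  symm
  refine Nat.card_eq_of_bijective
    (fun a => ⟨1 + Matrix.vecMulVec v a.1, ⟨a.1, v, ?_, ?_, a.2.2, rfl⟩, ?_⟩) ⟨?_, ?_⟩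
  · intro h
    simpa [h] using a.2.1
  · exact fun h => hvk (congrFun h k)
  · ext m
    simp [Matrix.vecMulVec_apply, a.2.1, hv, Matrix.one_apply, Pi.single_apply]
  · rintro ⟨a, ha⟩ ⟨b, hb⟩ h
    ext m
    have h' : Matrix.vecMulVec v a = Matrix.vecMulVec v b :=
      add_left_cancel (congrArg Subtype.val h)
    have := congrFun (congrFun h' k) m
    exact mul_left_cancel₀ hvk this
  · rintro ⟨T, ⟨a, w, ha, hw, haw, rfl⟩, hu⟩
    have hvw : ∀ m, v m = w m * a i := by
      intro m
      simp [hv, ← hu, Matrix.vecMulVec_apply, Matrix.one_apply, Pi.single_apply]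
    have hai : a i ≠ 0 := fun h => hvk (by rw [hvw, h, mul_zero])
    refine ⟨⟨(a i)⁻¹ • a, by simp [hai], ?_⟩, ?_⟩
    · rw [← haw]
      refine Finset.sum_congr rfl fun m _ => ?_
      rw [hvw, Pi.smul_apply, smul_eq_mul]
      field_simp
    · ext m l
      simp only [Matrix.add_apply, Matrix.vecMulVec_apply, hvw, Pi.smul_apply, smul_eq_mul]
      field_simp

theorem card_pairs (i : Fin n) :
    Nat.card {p : (Fin n → F) × (Fin n → F) //
      p.1 ≠ 0 ∧ p.1 i = 0 ∧ p.2 ≠ 0 ∧ ∑ m, p.1 m * p.2 m = 0}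
      = (Fintype.card F ^ (n - 1) - 1) ^ 2 := by
  classical
  have e : {p : (Fin n → F) × (Fin n → F) //
      p.1 ≠ 0 ∧ p.1 i = 0 ∧ p.2 ≠ 0 ∧ ∑ m, p.1 m * p.2 m = 0} ≃
      Σ a : {a : Fin n → F // a ≠ 0 ∧ a i = 0},
        {v : Fin n → F // v ≠ 0 ∧ ∑ m, a.1 m * v m = 0} :=
    ⟨fun p => ⟨⟨p.1.1, p.2.1, p.2.2.1⟩, p.1.2, p.2.2.2⟩,
      fun s => ⟨(s.1.1, s.2.1), s.1.2.1, s.1.2.2, s.2.2⟩, fun _ => rfl, fun _ => rfl⟩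
  rw [Nat.card_congr e, Nat.card_sigma, Finset.sum_congr rfl
    fun a _ => card_orthogonal_ne_zero a.1 a.2.1, Finset.sum_const, Finset.card_univ,
    ← Nat.card_eq_fintype_card, card_ne_zero_of_apply_eq_zero, smul_eq_mul, sq]

theorem card_transvectionsWithCol_one (i : Fin n) :
    (Fintype.card F - 1) * Nat.card (transvectionsWithCol i (Pi.single i (1 : F)))
      = (Fintype.card F ^ (n - 1) - 1) ^ 2 := by
  classical
  rw [← card_pairs i]
  set S := {p : (Fin n → F) × (Fin n → F) //
      p.1 ≠ 0 ∧ p.1 i = 0 ∧ p.2 ≠ 0 ∧ ∑ m, p.1 m * p.2 m = 0}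
  let f : S → transvectionsWithCol i (Pi.single i (1 : F)) := fun p =>
    ⟨1 + Matrix.vecMulVec p.1.2 p.1.1, ⟨p.1.1, p.1.2, p.2.1, p.2.2.2.1, p.2.2.2.2, rfl⟩, by
      ext m
      simp [Matrix.vecMulVec_apply, p.2.2.1, Matrix.one_apply, Pi.single_apply]⟩
  have hfib : ∀ T, Nat.card {p // f p = T} = Fintype.card F - 1 := by
    rintro ⟨T, ⟨a, v, ha, hv, hav, rfl⟩, hu⟩
    have hai : a i = 0 := by
      obtain ⟨l, hl⟩ := Function.ne_iff.mp hv
      have := congrFun hu l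
      simp only [Matrix.add_apply, Matrix.one_apply, Pi.single_apply,
        Matrix.vecMulVec_apply] at this
      exact (mul_eq_zero.mp (add_eq_left.mp this)).resolve_left hl
    rw [← Fintype.card_units, ← Nat.card_eq_fintype_card]
    symm
    refine Nat.card_eq_of_bijective (fun c => ⟨⟨(c • a, c⁻¹ • v), ?_, ?_, ?_, ?_⟩, ?_⟩) ⟨?_, ?_⟩
    · exact (smul_ne_zero_iff_ne c).mpr ha
    · simp [hai]
    · exact (smul_ne_zero_iff_ne c⁻¹).mpr hv
    · rw [← hav]
      refine Finset.sum_congr rfl fun m _ => ?_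
      simp only [Pi.smul_apply, Units.smul_def, smul_eq_mul, Units.val_inv_eq_inv_val]
      field_simp
    · exact Subtype.ext (congrArg (1 + ·) ((vecMulVec_eq_iff ha hv).mpr ⟨c, rfl, rfl⟩))
    · intro c d h
      obtain ⟨k, hk⟩ := Function.ne_iff.mp ha
      have := congrFun (congrArg (fun p => p.1.1.1) h) k
      exact Units.ext (mul_right_cancel₀ hk this)
    · rintro ⟨⟨⟨b, w⟩, hp⟩, h⟩
      obtain ⟨c, rfl, rfl⟩ := (vecMulVec_eq_iff ha hv).mp
        (add_left_cancel (congrArg Subtype.val h))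
      exact ⟨c, rfl⟩
  have := Fintype.ofFinite (transvectionsWithCol i (Pi.single i (1 : F)))
  rw [← Nat.card_congr (Equiv.sigmaFiberEquiv f), Nat.card_sigma, Finset.sum_congr rfl
    fun T _ => hfib T, Finset.sum_const, Finset.card_univ,
    Nat.card_eq_fintype_card (α := transvectionsWithCol _ _), smul_eq_mul, mul_comm]

open Classical in
theorem sum_card_transvectionsWithCol (hn : 2 ≤ n) (i : Fin n) (U : Finset (Fin n → F)) :
    ∑ u ∈ U, Nat.card (transvectionsWithCol i u)
      = (if Pi.single i 1 ∈ U then Nat.card (transvectionsWithCol i (Pi.single i (1 : F))) else 0)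
        + (U.filter fun u => ∃ k, k ≠ i ∧ u k ≠ 0).card * Fintype.card F ^ (n - 2) := by
  rw [← Finset.sum_filter_not_add_sum_filter U (fun u => ∃ k, k ≠ i ∧ u k ≠ 0)]
  congr 1
  · rw [← Finset.sum_ite_eq' U (Pi.single i 1) fun u => Nat.card (transvectionsWithCol i u),
      Finset.sum_filter]
    refine Finset.sum_congr rfl fun u _ => ?_
    by_cases h : ∃ k, k ≠ i ∧ u k ≠ 0
    · obtain ⟨k, hki, hk⟩ := h
      have : u ≠ Pi.single i 1 := by
        rintro rfl
        simp [hki] at hk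
      simp only [this, if_false]
      exact if_neg fun h => h ⟨k, hki, hk⟩
    · rw [if_pos h]
      have hu : u = Pi.single i (u i) := by
        ext k
        by_cases hk : k = i
        · subst hk
          simp
        · simpa [hk] using not_not.mp fun h0 => h ⟨k, hk, h0⟩
      split_ifs with h1
      · rfl
      · rw [hu]
        refine card_transvectionsWithCol_single i _ fun h2 => h1 ?_
        rw [hu, h2]
  · rw [← smul_eq_mul, ← Finset.sum_const]
    refine Finset.sum_congr rfl fun u hu => ?_
    obtain ⟨-, k, hki, hk⟩ := Finset.mem_filter.mp hu
    exact card_transvectionsWithCol_of_ne hn i k u hki hk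

open Classical in
/-- Vectors whose last nonzero coordinate has index `j`. -/
noncomputable def topIdxVectors (F : Type*) [Field F] [Fintype F] (j : Fin n) :
    Finset (Fin n → F) :=
  Finset.univ.filter fun u => u j ≠ 0 ∧ ∀ m, j < m → u m = 0

theorem card_topIdxVectors (j : Fin n) :
    (topIdxVectors F j).card = (Fintype.card F - 1) * Fintype.card F ^ (j : ℕ) := by
  classical
  have h : topIdxVectors F j = Fintype.piFinset fun m =>
      if m < j then Finset.univ else if m = j then Finset.univ.erase 0 else {0} := by
    ext u
    simp only [topIdxVectors, Finset.mem_filter, Finset.mem_univ, true_and, Fintype.mem_piFinset]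
    constructor
    · rintro ⟨h1, h2⟩ m
      rcases lt_trichotomy m j with h | rfl | h
      · simp [h]
      · simpa using h1
      · simpa [h.not_gt, h.ne'] using h2 m h
    · intro h
      refine ⟨by simpa using h j, fun m hm => ?_⟩
      simpa [hm.not_gt, hm.ne'] using h m
  have hprod : ∀ m, (if m < j then Finset.univ else if m = j then Finset.univ.erase 0
      else {0} : Finset F).card =
      (if m = j then Fintype.card F - 1 else 1) * (if m < j then Fintype.card F else 1) := by
    intro m
    rcases lt_trichotomy m j with h | rfl | h
    · simp [h, h.ne]
    · simp
    · simp [h.not_gt, h.ne']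
  rw [h, Fintype.card_piFinset, Finset.prod_congr rfl fun m _ => hprod m,
    Finset.prod_mul_distrib, Finset.prod_ite_eq' Finset.univ j, if_pos (Finset.mem_univ j),
    Finset.prod_ite, Finset.prod_const, Finset.prod_const_one, mul_one]
  congr 2
  rw [← Fin.card_Iio j]
  congr 1
  ext
  simp

open Classical in
theorem card_filter_not_single_add (i : Fin n) (U : Finset (Fin n → F)) :
    (U.filter fun u => ∃ k, k ≠ i ∧ u k ≠ 0).card
      + (Finset.univ.filter fun c : F => Pi.single i c ∈ U).card = U.card := by
  rw [← Finset.card_filter_add_card_filter_not (s := U) (fun u => ∃ k, k ≠ i ∧ u k ≠ 0)]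
  congr 1
  rw [← Finset.card_image_of_injective _ (Pi.single_injective (M := fun _ => F) i)]
  congr 1
  ext u
  simp only [Finset.mem_image, Finset.mem_filter, Finset.mem_univ, true_and]
  constructor
  · rintro ⟨c, hc, rfl⟩
    refine ⟨hc, ?_⟩
    rintro ⟨k, hki, hk⟩
    simp [hki] at hk
  · rintro ⟨hu, h⟩
    have hu' : Pi.single i (u i) = u := by
      ext k
      by_cases hk : k = i
      · subst hk
        simp
      · simpa [hk] using (not_not.mp fun h0 => h ⟨k, hk, h0⟩).symm
    exact ⟨u i, hu'.symm ▸ hu, hu'⟩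

theorem card_transvectionsTopIdx_eq_sum (i j : Fin n) :
    Nat.card (transvectionsTopIdx n F i j)
      = ∑ u ∈ topIdxVectors F j, Nat.card (transvectionsWithCol i u) := by
  rw [← card_transvections_filter]
  exact Nat.card_congr (Equiv.subtypeEquivRight fun T => by
    simp only [transvectionsTopIdx, topIdxVectors, Set.mem_ofPred_eq, Finset.mem_filter,
      Finset.mem_univ, true_and])

theorem card_transvectionsTopIdx_of_ne (hn : 2 ≤ n) (i j : Fin n) (hij : i ≠ j) :
    Nat.card (transvectionsTopIdx n F i j)
      = (Fintype.card F - 1) * Fintype.card F ^ (n + (j : ℕ) - 2) := by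
  classical
  rw [card_transvectionsTopIdx_eq_sum, sum_card_transvectionsWithCol hn,
    if_neg (by simp [topIdxVectors, hij.symm]), zero_add, Finset.filter_true_of_mem,
    card_topIdxVectors, mul_assoc, ← pow_add]
  · congr 2
    omega
  · intro u hu
    exact ⟨j, hij.symm, (Finset.mem_filter.mp hu).2.1⟩

theorem card_transvectionsTopIdx_self (hn : 2 ≤ n) (i : Fin n) :
    (Fintype.card F - 1) * Nat.card (transvectionsTopIdx n F i i)
      = (Fintype.card F ^ (n - 1) - 1) ^ 2
        + (Fintype.card F - 1) ^ 2 * (Fintype.card F ^ (i : ℕ) - 1)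
            * Fintype.card F ^ (n - 2) := by
  classical
  have h := card_filter_not_single_add i (topIdxVectors F i)
  have hs : (Finset.univ.filter fun c : F => Pi.single i c ∈ topIdxVectors F i)
      = Finset.univ.erase 0 := by
    ext c
    simp +contextual [topIdxVectors, ne_of_gt]
  rw [hs, Finset.card_erase_of_mem (Finset.mem_univ _), Finset.card_univ,
    card_topIdxVectors] at h
  have h' := Nat.eq_sub_of_add_eq h
  rw [← Nat.mul_sub_one] at h'
  rw [card_transvectionsTopIdx_eq_sum, sum_card_transvectionsWithCol hn,
    if_pos (by simp +contextual [topIdxVectors, ne_of_gt]), mul_add,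
    card_transvectionsWithCol_one, h']
  ring

theorem card_transvections (hn : 2 ≤ n) :
    (Fintype.card F - 1) * Nat.card (transvections n F)
      = (Fintype.card F ^ n - 1) * (Fintype.card F ^ (n - 1) - 1) := by
  classical
  let i : Fin n := ⟨0, by omega⟩
  have h := card_filter_not_single_add i (Finset.univ : Finset (Fin n → F))
  have hT : Nat.card (transvections n F)
      = ∑ u ∈ (Finset.univ : Finset (Fin n → F)), Nat.card (transvectionsWithCol i u) := by
    rw [← card_transvections_filter]
    exact Nat.card_congr (Equiv.subtypeEquivRight fun T => by simp)
  rw [hT, sum_card_transvectionsWithCol hn, if_pos (Finset.mem_univ _), mul_add,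
    card_transvectionsWithCol_one]
  simp only [Finset.mem_univ, Finset.filter_true, Finset.card_univ, Fintype.card_fun,
    Fintype.card_fin] at h
  rw [Nat.eq_sub_of_add_eq h]
  obtain ⟨d, rfl⟩ := Nat.exists_eq_add_of_le hn
  have hq : 1 ≤ Fintype.card F := Fintype.card_pos
  generalize Fintype.card F = q at *
  rw [show 2 + d - 1 = d + 1 by omega, show 2 + d - 2 = d by omega]
  zify [hq, Nat.one_le_pow _ _ hq, Nat.le_self_pow (show 2 + d ≠ 0 by omega) q]
  ring

end Counting

/-- Counts for the top-label chain lumped from random transvections.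
(Indices here are `0`-based elements of `Fin n`, corresponding to the `1`-based indices
`i+1, j+1` of the informal statement; e.g. `q^{n+j−3}` for `1`-based `j` becomes
`q^{n+j−2}` for `0`-based `j`.)
(i) For `i ≠ j`, `|{T ∈ 𝒯 : ℓ(T,i) = j}| = (q−1) q^{n+j−2}`;
(ii) `(q−1)·|{T ∈ 𝒯 : ℓ(T,i) = i}| = (q^{n−1}−1)² + (q−1)²(q^i − 1) q^{n−2}`.
Consequently the top-label chain `P₁(i,j) = |{T ∈ 𝒯 : ℓ(T,i)=j}|/|𝒯|` satisfies
`P₁(i,j) = (q−1)² q^{n+j−2} / ((qⁿ−1)(q^{n−1}−1))` for `i ≠ j` and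
`P₁(i,i) = ((q^{n−1}−1)² + (q−1)²(q^i−1) q^{n−2}) / ((qⁿ−1)(q^{n−1}−1))`. -/
theorem top_label_chain_transitions
    (F : Type*) [Field F] [Fintype F] (n : ℕ) (hn : 2 ≤ n) :
    (∀ i j : Fin n, i ≠ j →
      Nat.card (transvectionsTopIdx n F i j)
        = (Fintype.card F - 1) * Fintype.card F ^ (n + (j : ℕ) - 2)) ∧
    (∀ i : Fin n,
      (Fintype.card F - 1) * Nat.card (transvectionsTopIdx n F i i)
        = (Fintype.card F ^ (n - 1) - 1) ^ 2
          + (Fintype.card F - 1) ^ 2 * (Fintype.card F ^ (i : ℕ) - 1)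
              * Fintype.card F ^ (n - 2)) ∧
    (∀ i j : Fin n, i ≠ j →
      (Nat.card (transvectionsTopIdx n F i j) : ℝ) / (Nat.card (transvections n F) : ℝ)
        = ((Fintype.card F : ℝ) - 1) ^ 2 * (Fintype.card F : ℝ) ^ (n + (j : ℕ) - 2)
            / (((Fintype.card F : ℝ) ^ n - 1) * ((Fintype.card F : ℝ) ^ (n - 1) - 1))) ∧
    (∀ i : Fin n,
      (Nat.card (transvectionsTopIdx n F i i) : ℝ) / (Nat.card (transvections n F) : ℝ)
        = (((Fintype.card F : ℝ) ^ (n - 1) - 1) ^ 2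
              + ((Fintype.card F : ℝ) - 1) ^ 2 * ((Fintype.card F : ℝ) ^ (i : ℕ) - 1)
                  * (Fintype.card F : ℝ) ^ (n - 2))
            / (((Fintype.card F : ℝ) ^ n - 1) * ((Fintype.card F : ℝ) ^ (n - 1) - 1))) := by
  have hq : 1 < Fintype.card F := Fintype.one_lt_card
  have hq' : (0 : ℝ) < (Fintype.card F : ℝ) - 1 := by
    rw [sub_pos]
    exact_mod_cast hq
  have hpow : ∀ k, 1 ≤ Fintype.card F ^ k := fun k => Nat.one_le_pow _ _ hq.le
  have hpos : ∀ k, k ≠ 0 → (0 : ℝ) < (Fintype.card F : ℝ) ^ k - 1 := fun k hk => by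
    rw [sub_pos]
    exact_mod_cast Nat.one_lt_pow hk hq
  have hT : ((Fintype.card F : ℝ) - 1) * Nat.card (transvections n F)
      = ((Fintype.card F : ℝ) ^ n - 1) * ((Fintype.card F : ℝ) ^ (n - 1) - 1) := by
    have h := congrArg (Nat.cast : ℕ → ℝ) (card_transvections (F := F) hn)
    simpa [Nat.cast_sub, hq.le, hpow] using h
  refine ⟨card_transvectionsTopIdx_of_ne hn, card_transvectionsTopIdx_self hn,
    fun i j hij => ?_, fun i => ?_⟩
  · rw [← hT, card_transvectionsTopIdx_of_ne hn i j hij, sq, mul_assoc,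
      mul_div_mul_left _ _ hq'.ne']
    simp [Nat.cast_sub, hq.le]
  · have h := congrArg (Nat.cast : ℕ → ℝ) (card_transvectionsTopIdx_self (F := F) hn i)
    simp only [Nat.cast_mul, Nat.cast_add, Nat.cast_pow, Nat.cast_sub hq.le,
      Nat.cast_sub (hpow _), Nat.cast_one] at h
    rw [← hT, ← h, mul_div_mul_left _ _ hq'.ne']
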